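/- Fix integers t ≥ 1, h ≥ 2t+2 and a ∈ {0,…,t−1}, and set ℓ_a = ⌈h/(t+a+1)⌉ and ℓ_{a+1} = ⌈h/(t+a+2)⌉. Let F be a finite simple graph such that: F has no cycle with more than ℓ_a − 1 vertices; every vertex of F has degree at least ℓ_{a+1}; every pair of distinct vertices of F has at least one common neighbor; and no path of F with the maximum number of vertices has its two endpoints adjacent. Let v_1, v_2, …, v_ℓ be a path of F with the maximum number of vertices. Then v_1 and v_ℓ have exactly one common neighbor; this common neighbor equals v_c for some index c with 1 < c < ℓ; every neighbor of v_1 lies in {v_2,…,v_c}; and every neighbor of v_ℓ lies in {v_c,…,v_{ℓ−1}}. -/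

import Mathlib

/-- Ceiling division of natural numbers: `⌈a/b⌉`. -/
def ceilDiv (a b : ℕ) : ℕ := (a + b - 1) / b

/-!
The proof is the rotation argument of Dirac and Pósa. Let `P = p₀ p₁ … pₙ` be a longest path, so
that all neighbors of `u = p₀` and of `v = pₙ` lie on `P`. Suppose that `P` has a crossing:
`v ∼ pᵢ` and `u ∼ pⱼ` with `i < j`. Choose one with `j - i` minimal; then neither `u` nor `v` has a
neighbor strictly between `pᵢ` and `pⱼ`. Following `P` from `u` to `pᵢ`, then the chord to `v`,
then `P` backwards to `pⱼ` and the chord to `u` gives a cycle that misses only the vertices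
strictly between `pᵢ` and `pⱼ`. Moreover `v ∼ pₖ` and `u ∼ pₖ₊₁` never hold together, since the
path from `u` over `pₖ` and `v` to `pₖ₊₁` would be a longest path with adjacent endpoints; so the
indices of the neighbors of `u` and the shifted indices of the neighbors of `v` are disjoint, and
counting them shows that the cycle has at least `deg u + deg v` vertices. All cycles are shorter
than that because `⌈h/m⌉ ≤ 2 ⌈h/(m+1)⌉`. Hence there is no crossing, and a common neighbor of `u`
and `v` has to separate their neighborhoods along `P`.
-/

open SimpleGraph

theorem ceilDiv_pos {h m : ℕ} (hh : 0 < h) (hm : 0 < m) : 0 < ceilDiv h m :=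
  Nat.div_pos (by omega) hm

theorem ceilDiv_le_mul_ceilDiv {h m k c : ℕ} (hk : 0 < k) (hkm : k ≤ c * m) :
    ceilDiv h m ≤ c * ceilDiv h k := by
  have hm : 0 < m := Nat.pos_of_mul_pos_left (hk.trans_le hkm)
  -- `ceilDiv` is definitionally Mathlib's `⌈/⌉` on `ℕ`, so its Galois connection applies.
  have le_mul : h ≤ k * ceilDiv h k := (ceilDiv_le_iff_le_mul hk).1 le_rfl
  refine (ceilDiv_le_iff_le_mul hm).2 ?_
  calc h ≤ k * ceilDiv h k := le_mul
    _ ≤ c * m * ceilDiv h k := Nat.mul_le_mul_right _ hkm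
    _ = m * (c * ceilDiv h k) := by ring

theorem ceilDiv_sub_one_lt_two_mul_ceilDiv_succ {h m : ℕ} (hh : 0 < h) (hm : 0 < m) :
    ceilDiv h m - 1 < 2 * ceilDiv h (m + 1) :=
  (Nat.sub_one_lt (ceilDiv_pos hh hm).ne').trans_le
    (ceilDiv_le_mul_ceilDiv m.succ_pos (by omega))

theorem exists_lt_forall_between_notMem {A B : Set ℕ} {i j : ℕ} (hi : i ∈ B) (hj : j ∈ A)
    (hij : i < j) :
    ∃ i' ∈ B, ∃ j' ∈ A, i' < j' ∧ ∀ k, i' < k → k < j' → k ∉ A ∧ k ∉ B := by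
  obtain ⟨⟨i, j⟩, ⟨hi, hj, hij⟩, hmin⟩ := exists_minimalFor_of_wellFoundedLT
    (fun p : ℕ × ℕ ↦ p.1 ∈ B ∧ p.2 ∈ A ∧ p.1 < p.2) (fun p ↦ p.2 - p.1) ⟨(i, j), hi, hj, hij⟩
  refine ⟨i, hi, j, hj, hij, fun k hik hkj ↦ ⟨fun hk ↦ ?_, fun hk ↦ ?_⟩⟩
  · have := @hmin (i, k) ⟨hi, hk, hik⟩
    grind
  · have := @hmin (k, j) ⟨hk, hj, hkj⟩
    grind

theorem ncard_add_ncard_le_of_gap {A B : Set ℕ} {i j n : ℕ} (hA : A ⊆ Set.Icc 1 n)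
    (hB : B ⊆ Set.Iio n) (hAB : ∀ k ∈ B, k + 1 ∉ A)
    (hgap : ∀ k, i < k → k < j → k ∉ A ∧ k ∉ B) :
    A.ncard + B.ncard ≤ (i + 1) + (n + 1 - j) := by
  have hdisj : Disjoint A ((· + 1) '' B) := by
    rw [Set.disjoint_left]
    rintro _ hA ⟨k, hk, rfl⟩
    exact hAB k hk hA
  have hsub : A ∪ (· + 1) '' B ⊆ ↑(Finset.Icc 1 (i + 1) ∪ Finset.Icc j n) := by
    rintro k (hk | ⟨k, hk, rfl⟩)
    · grind [hA hk]
    · grind [hB hk]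
  calc A.ncard + B.ncard = A.ncard + ((· + 1) '' B).ncard := by
        rw [Set.ncard_image_of_injective _ (add_left_injective 1)]
    _ = (A ∪ (· + 1) '' B).ncard :=
        (Set.ncard_union_eq hdisj ((Set.finite_Icc 1 n).subset hA)
          (((Set.finite_Iio n).subset hB).image _)).symm
    _ ≤ (Finset.Icc 1 (i + 1) ∪ Finset.Icc j n).card := by
        rw [← Set.ncard_coe_finset]
        exact Set.ncard_le_ncard hsub (Finset.finite_toSet _)
    _ ≤ (i + 1) + (n + 1 - j) := by
        simpa only [Nat.card_Icc, Nat.add_sub_cancel] using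
          Finset.card_union_le (Finset.Icc 1 (i + 1)) (Finset.Icc j n)

section Rotation

variable {V : Type*} {F : SimpleGraph V} {u v : V} {P : F.Walk u v} {i j : ℕ}

/-- The rotation of a walk `P` from `u` to `v` along a chord from `v` to the `i`-th vertex of `P`:
follow `P` up to index `i`, take the chord to `v`, and return along `P` to index `j`. Pósa's
rotation is the case `j = i + 1`; a larger `j` skips the vertices between the two indices. -/
def posaRotation (P : F.Walk u v) (i j : ℕ) (hvi : F.Adj v (P.getVert i)) :
    F.Walk u (P.getVert j) :=
  (P.take i).append (.cons hvi.symm (P.drop j).reverse)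

theorem length_posaRotation (hvi : F.Adj v (P.getVert i)) (hi : i ≤ P.length) :
    (posaRotation P i j hvi).length = i + 1 + (P.length - j) := by
  simp only [posaRotation, Walk.length_append, Walk.take_length, Walk.length_cons,
    Walk.length_reverse, Walk.drop_length, min_eq_left hi]
  omega

theorem disjoint_support_take_drop (hP : P.IsPath) (hij : i < j) (hj : j ≤ P.length) :
    (P.take i).support.Disjoint (P.drop j).support := by
  intro x hx hy
  obtain ⟨k, hk, hki⟩ := Walk.mem_support_iff_exists_getVert.1 hx
  obtain ⟨l, hl, hlj⟩ := Walk.mem_support_iff_exists_getVert.1 hy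
  rw [Walk.take_getVert] at hk
  rw [Walk.drop_getVert] at hl
  rw [Walk.take_length] at hki
  rw [Walk.drop_length] at hlj
  have : min i k = j + l := hP.getVert_injOn (by grind) (by grind) (hk.trans hl.symm)
  omega

theorem isPath_posaRotation (hP : P.IsPath) (hij : i < j) (hj : j ≤ P.length)
    (hvi : F.Adj v (P.getVert i)) : (posaRotation P i j hvi).IsPath := by
  rw [posaRotation, Walk.isPath_def, Walk.support_append, Walk.support_cons, List.tail_cons,
    List.nodup_append', Walk.support_reverse, List.nodup_reverse]
  refine ⟨(hP.take i).support_nodup, (hP.drop j).support_nodup, ?_⟩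
  exact fun x hx hy ↦ disjoint_support_take_drop hP hij hj hx (List.mem_reverse.1 hy)

theorem isCycle_cons_posaRotation (hP : P.IsPath) (hij : i < j) (hj : j < P.length)
    (hvi : F.Adj v (P.getVert i)) (huj : F.Adj u (P.getVert j)) :
    (Walk.cons huj.symm (posaRotation P i j hvi)).IsCycle := by
  rw [Walk.isCycle_iff_isPath_tail_and_le_length, Walk.length_cons,
    length_posaRotation hvi (by omega)]
  exact ⟨by simpa using isPath_posaRotation hP hij hj.le hvi, by omega⟩

end Rotation

section NeighborIndices

variable {V : Type*} {F : SimpleGraph V} {u v : V} {P : F.Walk u v} {x : V} {k : ℕ}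

/-- The positions along the walk `P` that are occupied by neighbors of `x`; they turn statements
about neighborhoods into statements about sets of natural numbers. The bound `k ≤ P.length` is
needed because `P.getVert` is constantly the last vertex from there on. -/
def neighborIndices (P : F.Walk u v) (x : V) : Set ℕ :=
  {k | k ≤ P.length ∧ F.Adj x (P.getVert k)}

theorem neighborIndices_start_subset : neighborIndices P u ⊆ Set.Icc 1 P.length := by
  rintro k ⟨hk, hadj⟩
  refine ⟨Nat.one_le_iff_ne_zero.2 ?_, hk⟩
  rintro rfl
  exact F.irrefl (P.getVert_zero ▸ hadj)

theorem neighborIndices_end_subset : neighborIndices P v ⊆ Set.Iio P.length := by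
  rintro k ⟨hk, hadj⟩
  refine lt_of_le_of_ne hk ?_
  rintro rfl
  exact F.irrefl (P.getVert_length ▸ hadj)

theorem ncard_neighborSet_le_ncard_neighborIndices (hx : ∀ w, F.Adj x w → w ∈ P.support) :
    (F.neighborSet x).ncard ≤ (neighborIndices P x).ncard := by
  have hfin : (neighborIndices P x).Finite := (Set.finite_Iic P.length).subset fun _ hk ↦ hk.1
  have hsub : F.neighborSet x ⊆ P.getVert '' neighborIndices P x := by
    intro w hw
    obtain ⟨k, rfl, hk⟩ := Walk.mem_support_iff_exists_getVert.1 (hx w hw)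
    exact ⟨k, ⟨hk, hw⟩, rfl⟩
  exact (Set.ncard_le_ncard hsub (hfin.image _)).trans (Set.ncard_image_le hfin)

end NeighborIndices

/-- A path with the maximum number of vertices among all paths of the graph, between any
endpoints. Since all paths are compared, `Walk.length`, the number of edges, can stand in for the
number of vertices. -/
structure IsLongestPath {V : Type*} {F : SimpleGraph V} {u v : V} (P : F.Walk u v) : Prop where
  isPath : P.IsPath
  length_le : ∀ (x y : V) (Q : F.Walk x y), Q.IsPath → Q.length ≤ P.length

namespace IsLongestPath

variable {V : Type*} {F : SimpleGraph V} {u v : V} {P : F.Walk u v}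

theorem reverse (hP : IsLongestPath P) : IsLongestPath P.reverse :=
  ⟨hP.isPath.reverse, by simpa only [Walk.length_reverse] using hP.length_le⟩

theorem of_length_eq (hP : IsLongestPath P) {x y : V} {Q : F.Walk x y} (hQ : Q.IsPath)
    (hlen : Q.length = P.length) : IsLongestPath Q :=
  ⟨hQ, fun _ _ R hR ↦ (hP.length_le _ _ R hR).trans_eq hlen.symm⟩

theorem ne_of_adj (hP : IsLongestPath P) {x y : V} (hxy : F.Adj x y) : u ≠ v := by
  rintro rfl
  have hnil : P.length = 0 := Walk.length_eq_zero_iff.2 (Walk.isPath_iff_nil.1 hP.isPath)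
  have hedge : hxy.toWalk.length ≤ P.length := hP.length_le _ _ _ (Walk.IsPath.of_adj hxy)
  simp [hnil] at hedge

theorem mem_support_of_adj_start (hP : IsLongestPath P) {w : V} (hw : F.Adj u w) :
    w ∈ P.support := by
  by_contra hmem
  have hlen := hP.length_le _ _ (.cons hw.symm P) (hP.isPath.cons hmem)
  rw [Walk.length_cons] at hlen
  omega

theorem mem_support_of_adj_end (hP : IsLongestPath P) {w : V} (hw : F.Adj v w) :
    w ∈ P.support := by
  simpa only [Walk.support_reverse, List.mem_reverse] using hP.reverse.mem_support_of_adj_start hw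

section NoClosedLongestPath

variable (hP : IsLongestPath P)
  (hopen : ∀ (x y : V) (Q : F.Walk x y), IsLongestPath Q → ¬ F.Adj x y)

include hP hopen

theorem succ_notMem_neighborIndices_start {k : ℕ} (hk : k ∈ neighborIndices P v) :
    k + 1 ∉ neighborIndices P u := by
  intro ⟨hk', huk⟩
  refine hopen _ _ (posaRotation P k (k + 1) hk.2) (hP.of_length_eq ?_ ?_) huk
  · exact isPath_posaRotation hP.isPath k.lt_succ_self hk' hk.2
  · rw [length_posaRotation _ hk.1]
    omega

theorem length_notMem_neighborIndices_start : P.length ∉ neighborIndices P u :=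
  fun h ↦ hopen u v P hP (P.getVert_length ▸ h.2)

theorem exists_isCycle_of_crossing {i j : ℕ} (hi : i ∈ neighborIndices P v)
    (hj : j ∈ neighborIndices P u) (hij : i < j) :
    ∃ (x : V) (c : F.Walk x x), c.IsCycle ∧
      (F.neighborSet u).ncard + (F.neighborSet v).ncard ≤ c.length := by
  obtain ⟨i, hi, j, hj, hij, hgap⟩ := exists_lt_forall_between_notMem hi hj hij
  have hj_lt : j < P.length := lt_of_le_of_ne hj.1 fun h ↦
    hP.length_notMem_neighborIndices_start hopen (h ▸ hj)
  refine ⟨_, _, isCycle_cons_posaRotation hP.isPath hij hj_lt hi.2 hj.2, ?_⟩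
  calc (F.neighborSet u).ncard + (F.neighborSet v).ncard
      ≤ (neighborIndices P u).ncard + (neighborIndices P v).ncard := add_le_add
        (ncard_neighborSet_le_ncard_neighborIndices fun _ ↦ hP.mem_support_of_adj_start)
        (ncard_neighborSet_le_ncard_neighborIndices fun _ ↦ hP.mem_support_of_adj_end)
    _ ≤ (i + 1) + (P.length + 1 - j) :=
        ncard_add_ncard_le_of_gap neighborIndices_start_subset neighborIndices_end_subset
          (fun _ ↦ hP.succ_notMem_neighborIndices_start hopen) hgap
    _ = (Walk.cons hj.2.symm (posaRotation P i j hi.2)).length := by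
        rw [Walk.length_cons, length_posaRotation _ hi.1]
        omega

end NoClosedLongestPath

end IsLongestPath

theorem stmt17_general {V : Type*} {F : SimpleGraph V} {u v : V} {P : F.Walk u v}
    (hP : IsLongestPath P)
    (hopen : ∀ (x y : V) (Q : F.Walk x y), IsLongestPath Q → ¬ F.Adj x y)
    (hcyc : ∀ (x : V) (c : F.Walk x x), c.IsCycle →
      c.length < (F.neighborSet u).ncard + (F.neighborSet v).ncard)
    (hcommon : ∃ x, F.Adj u x ∧ F.Adj v x) :
    ∃ c : ℕ, 0 < c ∧ c < P.length ∧
      (∀ w : V, (F.Adj u w ∧ F.Adj v w) ↔ w = P.getVert c) ∧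
      (∀ w : V, F.Adj u w → ∃ i, 1 ≤ i ∧ i ≤ c ∧ w = P.getVert i) ∧
      (∀ w : V, F.Adj v w → ∃ i, c ≤ i ∧ i ≤ P.length - 1 ∧ w = P.getVert i) := by
  have no_crossing : ∀ i ∈ neighborIndices P u, ∀ j ∈ neighborIndices P v, i ≤ j := by
    intro i hi j hj
    by_contra! hji
    obtain ⟨x, c, hc, hlen⟩ := hP.exists_isCycle_of_crossing hopen hj hi hji
    exact (hcyc x c hc).not_ge hlen
  obtain ⟨x, hux, hvx⟩ := hcommon
  obtain ⟨c, rfl, hc⟩ :=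
    Walk.mem_support_iff_exists_getVert.1 (hP.mem_support_of_adj_start hux)
  have nbr_start : ∀ w, F.Adj u w → ∃ i, 1 ≤ i ∧ i ≤ c ∧ w = P.getVert i := by
    intro w hw
    obtain ⟨k, rfl, hk⟩ := Walk.mem_support_iff_exists_getVert.1 (hP.mem_support_of_adj_start hw)
    exact ⟨k, (neighborIndices_start_subset ⟨hk, hw⟩).1, no_crossing k ⟨hk, hw⟩ c ⟨hc, hvx⟩, rfl⟩
  have nbr_end : ∀ w, F.Adj v w → ∃ i, c ≤ i ∧ i ≤ P.length - 1 ∧ w = P.getVert i := by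
    intro w hw
    obtain ⟨k, rfl, hk⟩ := Walk.mem_support_iff_exists_getVert.1 (hP.mem_support_of_adj_end hw)
    exact ⟨k, no_crossing c ⟨hc, hux⟩ k ⟨hk, hw⟩,
      Nat.le_sub_one_of_lt (neighborIndices_end_subset ⟨hk, hw⟩), rfl⟩
  refine ⟨c, (neighborIndices_start_subset ⟨hc, hux⟩).1, neighborIndices_end_subset ⟨hc, hvx⟩,
    fun w ↦ ⟨fun ⟨huw, hvw⟩ ↦ ?_, fun h ↦ h ▸ ⟨hux, hvx⟩⟩, nbr_start, nbr_end⟩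
  obtain ⟨k, rfl, hk⟩ := Walk.mem_support_iff_exists_getVert.1 (hP.mem_support_of_adj_start huw)
  rw [(no_crossing k ⟨hk, huw⟩ c ⟨hc, hvx⟩).antisymm (no_crossing c ⟨hc, hux⟩ k ⟨hk, hvw⟩)]

theorem stmt17 {V : Type*} [Fintype V] (t h a : ℕ) (ht : 1 ≤ t)
    (hh : 2 * t + 2 ≤ h) (ha : a < t)
    (F : SimpleGraph V)
    (hcyc : ∀ (x : V) (c : F.Walk x x), c.IsCycle →
      c.length ≤ ceilDiv h (t + a + 1) - 1)
    (hdeg : ∀ v : V, ceilDiv h (t + a + 2) ≤ (F.neighborSet v).ncard)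
    (hcodeg : ∀ v w : V, v ≠ w → ∃ x, F.Adj v x ∧ F.Adj w x)
    (hnocycle : ∀ (x y : V) (Q : F.Walk x y), Q.IsPath →
      (∀ (x' y' : V) (R : F.Walk x' y'), R.IsPath → R.length ≤ Q.length) →
      ¬ F.Adj x y)
    (u v : V) (P : F.Walk u v) (hP : P.IsPath)
    (hmax : ∀ (x y : V) (Q : F.Walk x y), Q.IsPath → Q.length ≤ P.length) :
    ∃ c : ℕ, 0 < c ∧ c < P.length ∧
      (∀ w : V, (F.Adj u w ∧ F.Adj v w) ↔ w = P.getVert c) ∧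
      (∀ w : V, F.Adj u w → ∃ i, 1 ≤ i ∧ i ≤ c ∧ w = P.getVert i) ∧
      (∀ w : V, F.Adj v w → ∃ i, c ≤ i ∧ i ≤ P.length - 1 ∧ w = P.getVert i) := by
  have hlongest : IsLongestPath P := ⟨hP, hmax⟩
  have hceil : ceilDiv h (t + a + 1) - 1 < 2 * ceilDiv h (t + a + 2) :=
    ceilDiv_sub_one_lt_two_mul_ceilDiv_succ (by omega) (by omega)
  obtain ⟨w, huw⟩ : (F.neighborSet u).Nonempty := Set.nonempty_of_ncard_ne_zero <|
    ((ceilDiv_pos (by omega) (by omega)).trans_le (hdeg u)).ne'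
  exact stmt17_general hlongest (fun x y Q hQ ↦ hnocycle x y Q hQ.isPath hQ.length_le)
    (fun x c hc ↦ by linarith [hcyc x c hc, hdeg u, hdeg v])
    (hcodeg u v (hlongest.ne_of_adj huw))
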